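/- (Theorem 6, high-energy asymptotics of the momentum) Assume Assumption C and fix T > 0 and (x₀,ξ₀) ∈ ℝ^d × ℝ^d with ξ₀ ≠ 0. Let (y,η) solve the Hamilton equations for k with y(0)=x₀, η(0)=ξ₀, and suppose |y(s)| ≥ c|s| − C for all s ∈ ℝ (with c, C > 0), so that ξ± = lim_{s→±∞} η(s) exist. For each λ ≥ 1, let (x_λ, ξ_λ) solve the Hamilton equations for p with x_λ(0)=x₀, ξ_λ(0)=λξ₀, and suppose there exist λ₀ ≥ 1 and c', C', M > 0 such that |x_λ(s)| ≥ c'λ|s| − C' and |ξ_λ(s)| ≤ Mλ for all |s| ≤ T and λ ≥ λ₀. Then for every t with 0 < t ≤ T, lim_{λ→∞} λ^{−1}·ξ_λ(t) = ξ₊, and for every t with −T ≤ t < 0, lim_{λ→∞} λ^{−1}·ξ_λ(t) = ξ₋. -/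

import Mathlib

open Filter MeasureTheory
open scoped Topology BigOperators

noncomputable section

abbrev E (d : ℕ) := EuclideanSpace ℝ (Fin d)

/-- Japanese bracket `⟨x⟩ = (1+|x|²)^{1/2}`. -/
def jap {d : ℕ} (x : E d) : ℝ := Real.sqrt (1 + ‖x‖ ^ 2)

/-- Japanese bracket of a real number. -/
def japr (t : ℝ) : ℝ := Real.sqrt (1 + t ^ 2)

/-- The kinetic energy symbol `k(x,ξ) = (1/2) Σ a_{mn}(x) ξ_m ξ_n`. -/
def kk {d : ℕ} (a : Fin d → Fin d → E d → ℝ) (x ξ : E d) : ℝ :=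
  (1 / 2) * ∑ m : Fin d, ∑ n : Fin d, a m n x * ξ m * ξ n

/-- `(y, η)` solves the Hamilton equations for the Hamiltonian `h`. -/
def IsHamiltonSol {d : ℕ} (h : E d → E d → ℝ) (y η : ℝ → E d) : Prop :=
  ∀ t : ℝ, HasDerivAt y (gradient (h (y t)) (η t)) t ∧
    HasDerivAt η (-gradient (fun x => h x (η t)) (y t)) t

/-- Assumption C (with long range exponent `μ` and short range exponent `ν`). -/
def AssumptionC {d : ℕ} (μ ν : ℝ) (a : Fin d → Fin d → E d → ℝ) (VL VS : E d → ℝ) : Prop :=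
  (∀ m n, ContDiff ℝ (⊤ : ℕ∞) (a m n)) ∧
  (∀ m n x, a m n x = a n m x) ∧
  (∀ (x ξ : E d), ξ ≠ 0 → 0 < ∑ m : Fin d, ∑ n : Fin d, a m n x * ξ m * ξ n) ∧
  (∀ m n (j : ℕ), ∃ C > 0, ∀ x : E d,
    ‖iteratedFDeriv ℝ j (fun z => a m n z - if m = n then (1 : ℝ) else 0) x‖
      ≤ C * jap x ^ (-μ - (j : ℝ))) ∧
  ContDiff ℝ (⊤ : ℕ∞) VL ∧ ContDiff ℝ (⊤ : ℕ∞) VS ∧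
  (∀ j : ℕ, ∃ C > 0, ∀ x : E d,
    ‖iteratedFDeriv ℝ j VL x‖ ≤ C * jap x ^ (2 - μ - (j : ℝ))) ∧
  (∀ j : ℕ, ∃ C > 0, ∀ x : E d,
    ‖iteratedFDeriv ℝ j VS x‖ ≤ C * jap x ^ (2 - ν - (j : ℝ)))

/-!
Put `z(s) = x_λ(s/λ)` and `ζ(s) = λ⁻¹ ξ_λ(s/λ)`. Since `k` is quadratic in `ξ`, the pair `(z, ζ)`
starts at `(x₀, ξ₀)` and solves the Hamilton equations for `k + λ⁻² V`; its momentum at the horizon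
`λt` is `λ⁻¹ ξ_λ(t)`. As `∇V` is sublinear and `z` travels a distance `O(λ)` up to the horizon, the
force `λ⁻² ∇V(z)` is `o(1/λ)` there. On a fixed interval `[0, S]` Grönwall's inequality therefore
gives `ζ(S) → η(S)`. On `[S, λt]` the total impulse of the potential is `o(1)`, and that of the
metric is `O(S^{-μ})` because `∇a = O(⟨x⟩^{-1-μ})` and `|z|` grows linearly. Letting first `λ → ∞`
and then `S → ∞` proves the claim for `t > 0`; reversing time proves it for `t < 0`.
-/

open Asymptotics

theorem tendsto_of_eventually_dist_le {ι κ α : Type*} [PseudoMetricSpace α] {p : Filter ι}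
    {q : Filter κ} [p.NeBot] {u : ι → κ → α} {v : ι → α} {w : κ → α} {a : α}
    (hu : ∀ᶠ i in p, Tendsto (u i) q (𝓝 (v i))) (hv : Tendsto v p (𝓝 a))
    (hw : ∀ ε > 0, ∀ᶠ i in p, ∀ᶠ k in q, dist (w k) (u i k) ≤ ε) :
    Tendsto w q (𝓝 a) := by
  rw [Metric.tendsto_nhds]
  intro ε hε
  have hε3 : 0 < ε / 3 := by positivity
  obtain ⟨i, hui, hvi, hwi⟩ :=
    (hu.and ((Metric.tendsto_nhds.1 hv _ hε3).and (hw _ hε3))).exists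
  filter_upwards [Metric.tendsto_nhds.1 hui _ hε3, hwi] with k huk hwk
  linarith [dist_triangle4 (w k) (u i k) (v i) a]

theorem exists_norm_le_mul_norm_add_of_isLittleO {V W : Type*} [NormedAddCommGroup V]
    [NormedAddCommGroup W] {f : V → W} (hf : Continuous f)
    (hf' : f =o[cocompact V] fun x => ‖x‖) {δ : ℝ} (hδ : 0 < δ) :
    ∃ B, ∀ x, ‖f x‖ ≤ δ * ‖x‖ + B := by
  obtain ⟨K, hK, hKf⟩ := mem_cocompact.1 (isLittleO_iff.1 hf' hδ)
  obtain ⟨B, hB⟩ := hK.exists_bound_of_continuousOn hf.continuousOn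
  refine ⟨max B 0, fun x => ?_⟩
  by_cases hx : x ∈ K
  · have : 0 ≤ δ * ‖x‖ := by positivity
    linarith [hB x hx, le_max_left B 0]
  · have : ‖f x‖ ≤ δ * ‖‖x‖‖ := hKf hx
    rw [norm_norm] at this
    linarith [le_max_right B 0]

theorem tendsto_gronwallBound_zero (K x : ℝ) :
    Tendsto (fun ε => gronwallBound 0 K ε x) (𝓝 0) (𝓝 0) := by
  simpa only [gronwallBound_ε0_δ0] using (gronwallBound_continuous_ε 0 K x).tendsto 0

theorem tendsto_of_approx_trajectories {P ι : Type*} [NormedAddCommGroup P] [NormedSpace ℝ P]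
    [ProperSpace P] {p : Filter ι} {v : P → P} (hv : LocallyLipschitz v) {g : ℝ → P}
    {f f' : ι → ℝ → P} {a b r : ℝ} (hab : a ≤ b)
    (hg : ∀ t ∈ Set.Icc a b, HasDerivAt g (v (g t)) t)
    (hf : ∀ᶠ i in p, ∀ t ∈ Set.Icc a b, HasDerivAt (f i) (f' i t) t)
    (hfa : ∀ᶠ i in p, f i a = g a)
    (hfr : ∀ᶠ i in p, ∀ t ∈ Set.Icc a b, ‖f i t‖ ≤ r)
    (happrox : ∀ ε > 0, ∀ᶠ i in p, ∀ t ∈ Set.Icc a b, dist (f' i t) (v (f i t)) ≤ ε) :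
    Tendsto (fun i => f i b) p (𝓝 (g b)) := by
  have hgc : ContinuousOn g (Set.Icc a b) := fun t ht =>
    (hg t ht).continuousAt.continuousWithinAt
  obtain ⟨r', hr'⟩ := isCompact_Icc.exists_bound_of_continuousOn hgc
  obtain ⟨K, hK⟩ := hv.locallyLipschitzOn.exists_lipschitzOnWith_of_compact
    (isCompact_closedBall (0 : P) (max r r'))
  rw [Metric.tendsto_nhds]
  intro ε hε
  obtain ⟨δ, hδε, hδ⟩ : ∃ δ, gronwallBound 0 K δ (b - a) < ε ∧ 0 < δ :=
    (((tendsto_gronwallBound_zero K (b - a)).mono_left (nhdsWithin_le_nhds (s := Set.Ioi 0))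
      |>.eventually_lt_const hε).and self_mem_nhdsWithin).exists
  filter_upwards [hf, hfa, hfr, happrox δ hδ] with i hfi hfai hfri happi
  refine lt_of_le_of_lt ?_ hδε
  have hIco : ∀ {t}, t ∈ Set.Ico a b → t ∈ Set.Icc a b := fun ht => Set.Ico_subset_Icc_self ht
  simpa only [add_zero] using dist_le_of_approx_trajectories_ODE_of_mem
    (v := fun _ => v) (s := fun _ => Metric.closedBall 0 (max r r')) (εg := 0) (δ := 0)
    (fun _ _ => hK)
    (fun t ht => (hfi t ht).continuousAt.continuousWithinAt)
    (fun t ht => (hfi t (hIco ht)).hasDerivWithinAt)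
    (fun t ht => happi t (hIco ht))
    (fun t ht => mem_closedBall_zero_iff.2 <| (hfri t (hIco ht)).trans (le_max_left _ _))
    hgc
    (fun t ht => (hg t (hIco ht)).hasDerivWithinAt)
    (fun t _ => (dist_self _).le)
    (fun t ht => mem_closedBall_zero_iff.2 <| (hr' t (hIco ht)).trans (le_max_right _ _))
    (by rw [hfai, dist_self]) b ⟨hab, le_rfl⟩

theorem norm_sub_le_of_norm_deriv_le_rpow {W : Type*} [NormedAddCommGroup W] [NormedSpace ℝ W]
    {f f' : ℝ → W} {K ρ μ a b : ℝ} (hK : 0 ≤ K) (hμ : 0 < μ) (ha : 0 < a) (hab : a ≤ b)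
    (hf : ∀ s ∈ Set.Icc a b, HasDerivAt f (f' s) s)
    (hf' : ∀ s ∈ Set.Icc a b, ‖f' s‖ ≤ K * s ^ (-1 - μ) + ρ) :
    ‖f b - f a‖ ≤ K / μ * a ^ (-μ) + ρ * (b - a) := by
  let B : ℝ → ℝ := fun s => K / μ * (a ^ (-μ) - s ^ (-μ)) + ρ * (s - a)
  have hB : ∀ s ∈ Set.Icc a b, HasDerivAt B (K * s ^ (-1 - μ) + ρ) s := by
    intro s hs
    have hpow := Real.hasDerivAt_rpow_const (x := s) (p := -μ) (Or.inl (ha.trans_le hs.1).ne')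
    refine (((hpow.const_sub (a ^ (-μ))).const_mul (K / μ)).add
      (((hasDerivAt_id s).sub_const a).const_mul ρ)).congr_deriv ?_
    rw [show -μ - 1 = -1 - μ by ring]
    field_simp
  have hfB : ‖f b - f a‖ ≤ B b := image_norm_le_of_norm_deriv_right_le_deriv_boundary'
    (f := fun s => f s - f a)
    (fun s hs => ((hf s hs).sub_const _).continuousAt.continuousWithinAt)
    (fun s hs => ((hf s (Set.Ico_subset_Icc_self hs)).sub_const _).hasDerivWithinAt)
    (by simp [B])
    (fun s hs => (hB s hs).continuousAt.continuousWithinAt)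
    (fun s hs => (hB s (Set.Ico_subset_Icc_self hs)).hasDerivWithinAt)
    (fun s hs => hf' s (Set.Ico_subset_Icc_self hs)) ⟨hab, le_rfl⟩
  have hb : 0 ≤ K / μ * b ^ (-μ) :=
    mul_nonneg (div_nonneg hK hμ.le) (Real.rpow_nonneg (ha.le.trans hab) _)
  calc ‖f b - f a‖ ≤ B b := hfB
    _ = K / μ * a ^ (-μ) - K / μ * b ^ (-μ) + ρ * (b - a) := by simp only [B]; ring
    _ ≤ K / μ * a ^ (-μ) + ρ * (b - a) := by linarith

section Gradient

variable {H : Type*} [NormedAddCommGroup H] [InnerProductSpace ℝ H] [CompleteSpace H]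

theorem norm_gradient_eq_norm_fderiv (f : H → ℝ) (x : H) : ‖gradient f x‖ = ‖fderiv ℝ f x‖ :=
  LinearIsometryEquiv.norm_map _ _

theorem contDiff_gradient {n m : WithTop ℕ∞} {f : H → ℝ} (hf : ContDiff ℝ n f)
    (hmn : m + 1 ≤ n) : ContDiff ℝ m (gradient f) :=
  (InnerProductSpace.toDual ℝ H).symm.toContinuousLinearEquiv.contDiff.comp
    (hf.fderiv_right hmn)

theorem gradient_const_mul (r : ℝ) (f : H → ℝ) (x : H) :
    gradient (fun z => r * f z) x = r • gradient f x := by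
  have h : fderiv ℝ (fun z => r * f z) x = r • fderiv ℝ f x :=
    congrFun (fderiv_const_smul_field (𝕜 := ℝ) (f := f) r) x
  simp [gradient, h]

theorem gradient_comp_smul (r : ℝ) (f : H → ℝ) (x : H) :
    gradient (fun z => f (r • z)) x = r • gradient f (r • x) := by
  simp [gradient, fderiv_comp_smul]

end Gradient

theorem IsHamiltonSol.rescale {d : ℕ} {h : E d → E d → ℝ} {y η : ℝ → E d}
    (hsol : IsHamiltonSol h y η) {r : ℝ} (hr : r ≠ 0) :
    IsHamiltonSol (fun x ξ => r⁻¹ ^ 2 * h x (r • ξ))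
      (fun t => y (r⁻¹ * t)) (fun t => r⁻¹ • η (r⁻¹ * t)) := by
  intro t
  obtain ⟨hy, hη⟩ := hsol (r⁻¹ * t)
  have htime : HasDerivAt (fun s => r⁻¹ * s) r⁻¹ t := by
    simpa only [id, mul_one] using (hasDerivAt_id t).const_mul r⁻¹
  constructor
  · refine (hy.scomp t htime).congr_deriv ?_
    rw [gradient_const_mul, gradient_comp_smul (f := h (y (r⁻¹ * t))), smul_inv_smul₀ hr,
      smul_smul]
    congr 1
    field_simp
  · refine ((hη.scomp t htime).const_smul r⁻¹).congr_deriv ?_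
    rw [gradient_const_mul (f := fun x => h x (r • r⁻¹ • η (r⁻¹ * t))), smul_inv_smul₀ hr]
    module

section KineticEnergy

variable {d : ℕ} {a : Fin d → Fin d → E d → ℝ} {V : E d → ℝ}

/-- The velocity field `∂k/∂ξ` of the kinetic energy, symmetrised over the two indices so
that it is the gradient for every matrix field `a`. -/
def velocity (a : Fin d → Fin d → E d → ℝ) (x ξ : E d) : E d :=
  ∑ m, ∑ n, (1 / 2 * a m n x) •
    (ξ n • EuclideanSpace.single m (1 : ℝ) + ξ m • EuclideanSpace.single n (1 : ℝ))

/-- The force field `-∂k/∂x` that the metric exerts on the momentum. -/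
def metricForce (a : Fin d → Fin d → E d → ℝ) (x ξ : E d) : E d :=
  -∑ m, ∑ n, (1 / 2 * ξ m * ξ n) • gradient (a m n) x

theorem kk_smul (a : Fin d → Fin d → E d → ℝ) (x ξ : E d) (r : ℝ) :
    kk a x (r • ξ) = r ^ 2 * kk a x ξ := by
  simp only [kk, PiLp.smul_apply, smul_eq_mul, Finset.mul_sum]
  exact Finset.sum_congr rfl fun m _ => Finset.sum_congr rfl fun n _ => by ring

theorem hasGradientAt_kk_momentum (a : Fin d → Fin d → E d → ℝ) (x ξ : E d) :
    HasGradientAt (kk a x) (velocity a x ξ) ξ := by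
  rw [hasGradientAt_iff_hasFDerivAt]
  refine ((HasFDerivAt.fun_sum fun m _ => HasFDerivAt.fun_sum fun n _ =>
    ((PiLp.hasFDerivAt_apply (𝕜 := ℝ) 2 ξ m).const_mul (a m n x)).mul
      (PiLp.hasFDerivAt_apply (𝕜 := ℝ) 2 ξ n)).const_mul (1 / 2 : ℝ)).congr_fderiv ?_
  ext v
  simp only [one_div, smul_apply, sum_apply, add_apply, PiLp.proj_apply, smul_eq_mul,
    Finset.mul_sum, velocity, smul_add, map_sum, map_add, map_smul,
    InnerProductSpace.toDual_apply_apply, EuclideanSpace.inner_single_left,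
    Real.ringHom_apply, one_mul]
  exact Finset.sum_congr rfl fun m _ => Finset.sum_congr rfl fun n _ => by ring

theorem hasGradientAt_kk_position (ha : ∀ m n, Differentiable ℝ (a m n)) (x ξ : E d) :
    HasGradientAt (fun z => kk a z ξ) (-metricForce a x ξ) x := by
  rw [hasGradientAt_iff_hasFDerivAt]
  refine ((HasFDerivAt.fun_sum fun m _ => HasFDerivAt.fun_sum fun n _ =>
    (((ha m n x).hasFDerivAt).mul_const (ξ m)).mul_const (ξ n)).const_mul
      (1 / 2 : ℝ)).congr_fderiv ?_
  ext v
  simp only [one_div, smul_apply, sum_apply, smul_eq_mul, Finset.mul_sum, metricForce, neg_neg,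
    map_sum, map_smul, toDual_gradient]
  exact Finset.sum_congr rfl fun m _ => Finset.sum_congr rfl fun n _ => by ring

theorem isHamiltonSol_kk_add_iff (ha : ∀ m n, Differentiable ℝ (a m n))
    (hV : Differentiable ℝ V) {z ζ : ℝ → E d} :
    IsHamiltonSol (fun x ξ => kk a x ξ + V x) z ζ ↔
      ∀ t, HasDerivAt z (velocity a (z t) (ζ t)) t ∧
        HasDerivAt ζ (metricForce a (z t) (ζ t) - gradient V (z t)) t := by
  have hξ : ∀ x ξ, gradient (fun ζ => kk a x ζ + V x) ξ = velocity a x ξ := fun x ξ =>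
    HasGradientAt.gradient <| hasGradientAt_iff_hasFDerivAt.2 <|
      (hasGradientAt_kk_momentum a x ξ).hasFDerivAt.add_const _
  have hx : ∀ x ξ, gradient (fun z => kk a z ξ + V z) x =
      -metricForce a x ξ + gradient V x := fun x ξ =>
    HasGradientAt.gradient <| hasGradientAt_iff_hasFDerivAt.2 <| by
      rw [map_add]
      exact (hasGradientAt_kk_position ha x ξ).hasFDerivAt.add (hV x).hasGradientAt.hasFDerivAt
  simp only [IsHamiltonSol, hξ, hx, neg_add, neg_neg, ← sub_eq_add_neg]

theorem isHamiltonSol_kk_iff (ha : ∀ m n, Differentiable ℝ (a m n)) {y η : ℝ → E d} :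
    IsHamiltonSol (kk a) y η ↔
      ∀ t, HasDerivAt y (velocity a (y t) (η t)) t ∧
        HasDerivAt η (metricForce a (y t) (η t)) t := by
  simpa only [add_zero, gradient_fun_const, sub_zero] using
    isHamiltonSol_kk_add_iff (V := fun _ => 0) ha (differentiable_const 0)

theorem IsHamiltonSol.rescale_kk_add {z ζ : ℝ → E d} {r : ℝ} (hr : r ≠ 0)
    (hsol : IsHamiltonSol (fun x ξ => kk a x ξ + V x) z ζ) :
    IsHamiltonSol (fun x ξ => kk a x ξ + r⁻¹ ^ 2 * V x)
      (fun t => z (r⁻¹ * t)) (fun t => r⁻¹ • ζ (r⁻¹ * t)) := by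
  have hkk : ∀ x ξ, r⁻¹ ^ 2 * (kk a x (r • ξ) + V x) = kk a x ξ + r⁻¹ ^ 2 * V x := by
    intro x ξ
    rw [kk_smul]
    field_simp
  simpa only [hkk] using hsol.rescale hr

-- Rescaling by the factor `-1`, under which `k`, being even in `ξ`, is invariant.
theorem IsHamiltonSol.time_reversal {z ζ : ℝ → E d}
    (hsol : IsHamiltonSol (fun x ξ => kk a x ξ + V x) z ζ) :
    IsHamiltonSol (fun x ξ => kk a x ξ + V x) (fun t => z (-t)) (fun t => -ζ (-t)) := by
  simpa using hsol.rescale_kk_add (neg_ne_zero.2 one_ne_zero)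

theorem contDiff_velocity (ha : ∀ m n, ContDiff ℝ 1 (a m n)) :
    ContDiff ℝ 1 fun p : E d × E d => velocity a p.1 p.2 := by
  have hcoord : ∀ m : Fin d, ContDiff ℝ 1 fun p : E d × E d => p.2 m := fun m =>
    contDiff_euclidean.1 contDiff_snd m
  exact ContDiff.sum fun m _ => ContDiff.sum fun n _ =>
    (contDiff_const.mul ((ha m n).comp contDiff_fst)).smul
      (((hcoord n).smul contDiff_const).add ((hcoord m).smul contDiff_const))

theorem contDiff_metricForce (ha : ∀ m n, ContDiff ℝ 2 (a m n)) :
    ContDiff ℝ 1 fun p : E d × E d => metricForce a p.1 p.2 := by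
  have hcoord : ∀ m : Fin d, ContDiff ℝ 1 fun p : E d × E d => p.2 m := fun m =>
    contDiff_euclidean.1 contDiff_snd m
  exact (ContDiff.sum fun m _ => ContDiff.sum fun n _ =>
    ((contDiff_const.mul (hcoord m)).mul (hcoord n)).smul
      ((contDiff_gradient (ha m n) (by norm_num)).comp contDiff_fst)).neg

theorem norm_velocity_le {D : Fin d → Fin d → ℝ} {x : E d} (hD : ∀ m n, |a m n x| ≤ D m n)
    (ξ : E d) : ‖velocity a x ξ‖ ≤ (∑ m, ∑ n, D m n) * ‖ξ‖ := by
  simp only [velocity, Finset.sum_mul]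
  refine norm_sum_le_of_le _ fun m _ => norm_sum_le_of_le _ fun n _ => ?_
  have hdir : ‖ξ n • EuclideanSpace.single m (1 : ℝ) + ξ m • EuclideanSpace.single n (1 : ℝ)‖
      ≤ 2 * ‖ξ‖ := by
    refine (norm_add_le _ _).trans ?_
    simp only [norm_smul, PiLp.norm_single, norm_one, mul_one]
    linarith [PiLp.norm_apply_le ξ m, PiLp.norm_apply_le ξ n]
  calc _ = 1 / 2 * |a m n x| *
        ‖ξ n • EuclideanSpace.single m (1 : ℝ) + ξ m • EuclideanSpace.single n (1 : ℝ)‖ := by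
        rw [norm_smul, norm_mul, Real.norm_eq_abs (a m n x)]; norm_num
    _ ≤ 1 / 2 * D m n * (2 * ‖ξ‖) :=
        mul_le_mul (by linarith [hD m n]) hdir (norm_nonneg _)
          (by linarith [hD m n, abs_nonneg (a m n x)])
    _ = D m n * ‖ξ‖ := by ring

theorem norm_metricForce_le {D : Fin d → Fin d → ℝ} {x : E d}
    (hD : ∀ m n, ‖fderiv ℝ (a m n) x‖ ≤ D m n) (ξ : E d) :
    ‖metricForce a x ξ‖ ≤ 1 / 2 * (∑ m, ∑ n, D m n) * ‖ξ‖ ^ 2 := by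
  simp only [metricForce, Finset.sum_mul, Finset.mul_sum, norm_neg]
  refine norm_sum_le_of_le _ fun m _ => norm_sum_le_of_le _ fun n _ => ?_
  calc _ = 1 / 2 * (‖ξ m‖ * ‖ξ n‖) * ‖fderiv ℝ (a m n) x‖ := by
        rw [norm_smul, norm_mul, norm_mul, norm_gradient_eq_norm_fderiv, mul_assoc (‖(1 / 2 : ℝ)‖)]
        norm_num
    _ ≤ 1 / 2 * (‖ξ‖ * ‖ξ‖) * D m n := by
        gcongr
        exacts [PiLp.norm_apply_le ξ m, PiLp.norm_apply_le ξ n, hD m n]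
    _ = 1 / 2 * D m n * ‖ξ‖ ^ 2 := by ring

end KineticEnergy

section JapaneseBracket

variable {d : ℕ}

theorem one_le_jap (x : E d) : 1 ≤ jap x :=
  Real.one_le_sqrt.2 (le_add_of_nonneg_right (sq_nonneg _))

theorem norm_le_jap (x : E d) : ‖x‖ ≤ jap x :=
  Real.le_sqrt_of_sq_le (le_add_of_nonneg_left zero_le_one)

theorem jap_le_one_add_norm (x : E d) : jap x ≤ 1 + ‖x‖ :=
  Real.sqrt_le_left (by positivity) |>.2 (by nlinarith [norm_nonneg x])

theorem jap_pos (x : E d) : 0 < jap x :=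
  one_pos.trans_le (one_le_jap x)

theorem mul_le_jap_of_mul_sub_le_norm {c s C : ℝ} {x : E d} (h : c * s - C ≤ ‖x‖) :
    c / (1 + |C|) * s ≤ jap x := by
  rw [div_mul_eq_mul_div, div_le_iff₀ (by positivity)]
  calc c * s ≤ jap x + |C| * 1 := by linarith [norm_le_jap x, le_abs_self C]
    _ ≤ jap x + |C| * jap x := by gcongr; exact one_le_jap x
    _ = jap x * (1 + |C|) := by ring

theorem jap_rpow_one_sub_isLittleO_norm {μ : ℝ} (hμ : 0 < μ) :
    (fun x : E d => jap x ^ (1 - μ)) =o[cocompact (E d)] fun x => ‖x‖ := by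
  have hnorm : Tendsto (fun x : E d => ‖x‖) (cocompact (E d)) atTop := tendsto_norm_cocompact_atTop
  have hdecay : (fun x : E d => jap x ^ (-μ)) =o[cocompact (E d)] fun _ => (1 : ℝ) :=
    (isLittleO_one_iff ℝ).2 <|
      (tendsto_rpow_neg_atTop hμ).comp (tendsto_atTop_mono norm_le_jap hnorm)
  have hlinear : (fun x : E d => jap x) =O[cocompact (E d)] fun x => ‖x‖ := by
    refine IsBigO.of_bound 2 ?_
    filter_upwards [hnorm.eventually_ge_atTop 1] with x hx
    rw [norm_norm, Real.norm_of_nonneg (jap_pos x).le]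
    linarith [jap_le_one_add_norm x]
  refine (hdecay.mul_isBigO hlinear).congr (fun x => ?_) (fun x => one_mul _)
  rw [← Real.rpow_add_one (jap_pos x).ne', neg_add_eq_sub]

end JapaneseBracket

/-- Zeroth and first order symbol bounds on the metric coefficients: they are bounded and their
gradients are `O(⟨x⟩^{-1-μ})`, hence integrable along a trajectory escaping at linear speed. -/
structure MetricDecay {d : ℕ} (μ : ℝ) (a : Fin d → Fin d → E d → ℝ) : Prop where
  contDiff : ∀ m n, ContDiff ℝ 2 (a m n)
  bounded : ∀ m n, ∃ D, ∀ x, |a m n x| ≤ D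
  fderiv_le : ∀ m n, ∃ D, ∀ x, ‖fderiv ℝ (a m n) x‖ ≤ D * jap x ^ (-1 - μ)

namespace MetricDecay

variable {d : ℕ} {μ : ℝ} {a : Fin d → Fin d → E d → ℝ}

theorem differentiable (ha : MetricDecay μ a) (m n : Fin d) : Differentiable ℝ (a m n) :=
  (ha.contDiff m n).differentiable two_ne_zero

theorem exists_norm_velocity_le (ha : MetricDecay μ a) :
    ∃ A, 0 ≤ A ∧ ∀ x ξ, ‖velocity a x ξ‖ ≤ A * ‖ξ‖ := by
  choose D hD using ha.bounded
  exact ⟨∑ m, ∑ n, D m n,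
    Finset.sum_nonneg fun m _ => Finset.sum_nonneg fun n _ => (abs_nonneg _).trans (hD m n 0),
    fun x ξ => norm_velocity_le (fun m n => hD m n x) ξ⟩

theorem exists_norm_metricForce_le (ha : MetricDecay μ a) :
    ∃ B, 0 ≤ B ∧ ∀ x ξ, ‖metricForce a x ξ‖ ≤ B * ‖ξ‖ ^ 2 * jap x ^ (-1 - μ) := by
  choose D hD using ha.fderiv_le
  have hD0 : ∀ m n, 0 ≤ D m n := fun m n => nonneg_of_mul_nonneg_left
    ((norm_nonneg _).trans (hD m n 0)) (Real.rpow_pos_of_pos (jap_pos 0) _)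
  refine ⟨1 / 2 * ∑ m, ∑ n, D m n, ?_, fun x ξ => ?_⟩
  · exact mul_nonneg one_half_pos.le <|
      Finset.sum_nonneg fun m _ => Finset.sum_nonneg fun n _ => hD0 m n
  · refine (norm_metricForce_le (fun m n => hD m n x) ξ).trans_eq ?_
    simp only [← Finset.sum_mul]
    ring

theorem locallyLipschitz_flow (ha : MetricDecay μ a) :
    LocallyLipschitz fun p : E d × E d => (velocity a p.1 p.2, metricForce a p.1 p.2) :=
  ((contDiff_velocity fun m n => (ha.contDiff m n).of_le one_le_two).prodMk
    (contDiff_metricForce ha.contDiff)).locallyLipschitz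

end MetricDecay

section Trajectories

variable {d : ℕ} {μ : ℝ} {a : Fin d → Fin d → E d → ℝ} {U : E d → ℝ} {z ζ : ℝ → E d}

theorem IsHamiltonSol.norm_position_le {A M S : ℝ} (ha : ∀ m n, Differentiable ℝ (a m n))
    (hU : Differentiable ℝ U) (hA : 0 ≤ A) (hvel : ∀ x ξ, ‖velocity a x ξ‖ ≤ A * ‖ξ‖)
    (hsol : IsHamiltonSol (fun x ξ => kk a x ξ + U x) z ζ)
    (hζ : ∀ s ∈ Set.Icc 0 S, ‖ζ s‖ ≤ M) {s : ℝ} (hs : s ∈ Set.Icc 0 S) :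
    ‖z s‖ ≤ ‖z 0‖ + A * M * s := by
  have hdrift := norm_image_sub_le_of_norm_deriv_le_segment'
    (fun s _ => ((isHamiltonSol_kk_add_iff ha hU).1 hsol s).1.hasDerivWithinAt)
    (fun s hs => (hvel (z s) (ζ s)).trans
      (mul_le_mul_of_nonneg_left (hζ s (Set.Ico_subset_Icc_self hs)) hA)) s hs
  rw [sub_zero] at hdrift
  linarith [norm_le_norm_add_norm_sub' (z s) (z 0)]

theorem IsHamiltonSol.norm_momentum_sub_le {B M κ ρ S b : ℝ}
    (ha : ∀ m n, Differentiable ℝ (a m n)) (hU : Differentiable ℝ U) (hμ : 0 < μ) (hB : 0 ≤ B)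
    (hforce : ∀ x ξ, ‖metricForce a x ξ‖ ≤ B * ‖ξ‖ ^ 2 * jap x ^ (-1 - μ))
    (hsol : IsHamiltonSol (fun x ξ => kk a x ξ + U x) z ζ) (hκ : 0 < κ) (hS : 0 < S)
    (hSb : S ≤ b) (hz : ∀ s ∈ Set.Icc S b, κ * s ≤ jap (z s))
    (hζ : ∀ s ∈ Set.Icc S b, ‖ζ s‖ ≤ M)
    (hρ : ∀ s ∈ Set.Icc S b, ‖fderiv ℝ U (z s)‖ ≤ ρ) :
    ‖ζ b - ζ S‖ ≤ B * M ^ 2 * κ ^ (-1 - μ) / μ * S ^ (-μ) + ρ * (b - S) := by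
  refine norm_sub_le_of_norm_deriv_le_rpow (by positivity) hμ hS hSb
    (fun s _ => ((isHamiltonSol_kk_add_iff ha hU).1 hsol s).2) fun s hs => ?_
  have hs0 : 0 < s := hS.trans_le hs.1
  have hdecay : jap (z s) ^ (-1 - μ) ≤ (κ * s) ^ (-1 - μ) :=
    Real.rpow_le_rpow_of_nonpos (by positivity) (hz s hs) (by linarith)
  calc ‖metricForce a (z s) (ζ s) - gradient U (z s)‖
      ≤ ‖metricForce a (z s) (ζ s)‖ + ‖gradient U (z s)‖ := norm_sub_le _ _
    _ ≤ B * M ^ 2 * (κ * s) ^ (-1 - μ) + ρ := by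
        rw [norm_gradient_eq_norm_fderiv]
        refine add_le_add ((hforce _ _).trans ?_) (hρ s hs)
        have := hζ s hs
        have := Real.rpow_nonneg (jap_pos (z s)).le (-1 - μ)
        gcongr
    _ = B * M ^ 2 * κ ^ (-1 - μ) * s ^ (-1 - μ) + ρ := by
        rw [Real.mul_rpow hκ.le hs0.le]
        ring

theorem tendsto_momentum_of_small_force {ι : Type*} {p : Filter ι} {U : ι → E d → ℝ}
    {y η : ℝ → E d} {z ζ : ι → ℝ → E d} {M S : ℝ} (hS : 0 ≤ S) (ha : MetricDecay μ a)
    (hU : ∀ i, Differentiable ℝ (U i)) (hyη : IsHamiltonSol (kk a) y η)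
    (hsol : ∀ᶠ i in p, IsHamiltonSol (fun x ξ => kk a x ξ + U i x) (z i) (ζ i))
    (hz0 : ∀ᶠ i in p, z i 0 = y 0) (hζ0 : ∀ᶠ i in p, ζ i 0 = η 0)
    (hζ : ∀ᶠ i in p, ∀ s ∈ Set.Icc 0 S, ‖ζ i s‖ ≤ M)
    (hforce : ∀ ε > 0, ∀ᶠ i in p, ∀ s ∈ Set.Icc 0 S, ‖fderiv ℝ (U i) (z i s)‖ ≤ ε) :
    Tendsto (fun i => ζ i S) p (𝓝 (η S)) := by
  obtain ⟨A, hA, hvel⟩ := ha.exists_norm_velocity_le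
  have hflow : Tendsto (fun i => (z i S, ζ i S)) p (𝓝 (y S, η S)) := by
    refine tendsto_of_approx_trajectories (r := max (‖y 0‖ + A * M * S) M)
      (f := fun i s => (z i s, ζ i s)) (g := fun s => (y s, η s))
      (f' := fun i s => (velocity a (z i s) (ζ i s),
        metricForce a (z i s) (ζ i s) - gradient (U i) (z i s)))
      ha.locallyLipschitz_flow hS ?_ ?_ ?_ ?_ ?_
    · intro t _
      have h := (isHamiltonSol_kk_iff ha.differentiable).1 hyη t
      exact h.1.prodMk h.2
    · filter_upwards [hsol] with i hi t _
      have h := (isHamiltonSol_kk_add_iff ha.differentiable (hU i)).1 hi t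
      exact h.1.prodMk h.2
    · filter_upwards [hz0, hζ0] with i hzi hζi
      rw [hzi, hζi]
    · filter_upwards [hsol, hz0, hζ] with i hi hzi hζi s hs
      have hM : 0 ≤ M := (norm_nonneg _).trans (hζi s hs)
      have hpos := hi.norm_position_le ha.differentiable (hU i) hA hvel hζi hs
      rw [hzi] at hpos
      refine max_le_max (hpos.trans ?_) (hζi s hs)
      gcongr
      exact hs.2
    · intro ε hε
      filter_upwards [hforce ε hε] with i hi s hs
      simp only [Prod.dist_eq, dist_self, dist_self_sub_left, norm_gradient_eq_norm_fderiv]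
      exact max_le hε.le (hi s hs)
  exact hflow.snd_nhds

theorem tendsto_momentum_at_horizon {ι : Type*} {p : Filter ι} {U : ι → E d → ℝ}
    {y η : ℝ → E d} {z ζ : ι → ℝ → E d} {τ : ι → ℝ} {ξp : E d} {c C M : ℝ} (hμ : 0 < μ)
    (ha : MetricDecay μ a) (hU : ∀ i, Differentiable ℝ (U i)) (hyη : IsHamiltonSol (kk a) y η)
    (hη : Tendsto η atTop (𝓝 ξp))
    (hsol : ∀ᶠ i in p, IsHamiltonSol (fun x ξ => kk a x ξ + U i x) (z i) (ζ i))
    (hz0 : ∀ᶠ i in p, z i 0 = y 0) (hζ0 : ∀ᶠ i in p, ζ i 0 = η 0) (hτ : Tendsto τ p atTop)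
    (hc : 0 < c)
    (hbd : ∀ᶠ i in p, ∀ s ∈ Set.Icc 0 (τ i), c * s - C ≤ ‖z i s‖ ∧ ‖ζ i s‖ ≤ M)
    (hforce : ∀ ε > 0, ∀ᶠ i in p, ∀ s ∈ Set.Icc 0 (τ i), ‖fderiv ℝ (U i) (z i s)‖ ≤ ε / τ i) :
    Tendsto (fun i => ζ i (τ i)) p (𝓝 ξp) := by
  refine tendsto_of_eventually_dist_le (u := fun S i => ζ i S) ?_ hη ?_
  · filter_upwards [eventually_ge_atTop 0] with S hS
    refine tendsto_momentum_of_small_force (M := M) hS ha hU hyη hsol hz0 hζ0 ?_ fun ε hε => ?_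
    · filter_upwards [hbd, hτ.eventually_ge_atTop S] with i hi hSτ s hs
      exact (hi s (Set.Icc_subset_Icc_right hSτ hs)).2
    · filter_upwards [hforce ε hε, hτ.eventually_ge_atTop S, hτ.eventually_ge_atTop 1]
        with i hi hSτ h1τ s hs
      exact (hi s (Set.Icc_subset_Icc_right hSτ hs)).trans (div_le_self hε.le h1τ)
  · intro ε hε
    obtain ⟨B, hB, hmetric⟩ := ha.exists_norm_metricForce_le
    have hκ : 0 < c / (1 + |C|) := by positivity
    have htail : Tendsto (fun S : ℝ => B * M ^ 2 * (c / (1 + |C|)) ^ (-1 - μ) / μ * S ^ (-μ))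
        atTop (𝓝 0) := by
      simpa only [mul_zero] using (tendsto_rpow_neg_atTop hμ).const_mul _
    filter_upwards [htail.eventually_le_const (half_pos hε), eventually_gt_atTop 0] with S hSε hS
    filter_upwards [hsol, hbd, hforce (ε / 2) (half_pos hε), hτ.eventually_ge_atTop S]
      with i hi hbi hfi hSτ
    have hsub : Set.Icc S (τ i) ⊆ Set.Icc 0 (τ i) := Set.Icc_subset_Icc_left hS.le
    have hτ0 : 0 < τ i := hS.trans_le hSτ
    calc dist (ζ i (τ i)) (ζ i S) = ‖ζ i (τ i) - ζ i S‖ := dist_eq_norm _ _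
      _ ≤ B * M ^ 2 * (c / (1 + |C|)) ^ (-1 - μ) / μ * S ^ (-μ) + ε / 2 / τ i * (τ i - S) :=
        hi.norm_momentum_sub_le ha.differentiable (hU i) hμ hB hmetric hκ hS hSτ
          (fun s hs => mul_le_jap_of_mul_sub_le_norm (hbi s (hsub hs)).1)
          (fun s hs => (hbi s (hsub hs)).2) (fun s hs => hfi s (hsub hs))
      _ ≤ ε / 2 + ε / 2 / τ i * τ i := by gcongr; exact sub_le_self _ hS.le
      _ = ε := by field_simp; ring

end Trajectories

section HighEnergy

variable {d : ℕ} {μ : ℝ} {a : Fin d → Fin d → E d → ℝ} {V : E d → ℝ}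

theorem eventually_norm_fderiv_rescaled_le (hV : ContDiff ℝ 1 V)
    (hV' : fderiv ℝ V =o[cocompact (E d)] fun x => ‖x‖) {Q ε : ℝ} (hQ : 0 ≤ Q) (hε : 0 < ε) :
    ∀ᶠ l : ℝ in atTop, ∀ x, ‖x‖ ≤ Q * l → ‖fderiv ℝ (fun z => l⁻¹ ^ 2 * V z) x‖ ≤ ε / l := by
  have hδ : 0 < ε / (2 * (Q + 1)) := by positivity
  obtain ⟨B, hB⟩ :=
    exists_norm_le_mul_norm_add_of_isLittleO (hV.continuous_fderiv one_ne_zero) hV' hδ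
  filter_upwards [eventually_gt_atTop 0, eventually_ge_atTop (2 * B / ε)] with l hl hBl x hx
  have hB2 : B ≤ ε / 2 * l := by
    rw [div_le_iff₀ hε] at hBl
    linarith
  have hδQ : ε / (2 * (Q + 1)) * Q ≤ ε / 2 := by
    rw [div_mul_eq_mul_div, div_le_div_iff₀ (by positivity) two_pos]
    nlinarith
  calc ‖fderiv ℝ (fun z => l⁻¹ ^ 2 * V z) x‖ = l⁻¹ ^ 2 * ‖fderiv ℝ V x‖ := by
        rw [fderiv_const_mul (hV.differentiable one_ne_zero x), norm_smul,
          Real.norm_of_nonneg (by positivity)]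
    _ ≤ l⁻¹ ^ 2 * (ε / (2 * (Q + 1)) * (Q * l) + B) := by
        gcongr
        exact (hB x).trans (by gcongr)
    _ ≤ l⁻¹ ^ 2 * (ε / 2 * l + ε / 2 * l) := by
        rw [← mul_assoc]
        gcongr
    _ = ε / l := by field_simp; ring

theorem eventually_norm_fderiv_rescaled_le_along {z ζ : ℝ → ℝ → E d} {x₀ : E d} {M t : ℝ}
    (ha : MetricDecay μ a) (hV : ContDiff ℝ 1 V)
    (hV' : fderiv ℝ V =o[cocompact (E d)] fun x => ‖x‖) (ht : 0 < t)
    (hsol : ∀ᶠ l in atTop, IsHamiltonSol (fun x ξ => kk a x ξ + l⁻¹ ^ 2 * V x) (z l) (ζ l))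
    (hz0 : ∀ᶠ l in atTop, z l 0 = x₀)
    (hζ : ∀ᶠ l in atTop, ∀ s ∈ Set.Icc 0 (l * t), ‖ζ l s‖ ≤ M) {ε : ℝ} (hε : 0 < ε) :
    ∀ᶠ l in atTop, ∀ s ∈ Set.Icc 0 (l * t),
      ‖fderiv ℝ (fun x => l⁻¹ ^ 2 * V x) (z l s)‖ ≤ ε / (l * t) := by
  obtain ⟨A, hA, hvel⟩ := ha.exists_norm_velocity_le
  have hQ : 0 ≤ ‖x₀‖ + A * |M| * t := by positivity
  filter_upwards [eventually_norm_fderiv_rescaled_le hV hV' hQ (div_pos hε ht), hsol, hz0, hζ,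
    eventually_ge_atTop 1] with l hsmall hl hzl hζl hl1 s hs
  have hU : Differentiable ℝ fun x => l⁻¹ ^ 2 * V x :=
    (hV.differentiable one_ne_zero).const_mul _
  rw [mul_comm l t, ← div_div]
  refine hsmall _ ?_
  calc ‖z l s‖ ≤ ‖z l 0‖ + A * |M| * s := hl.norm_position_le ha.differentiable hU hA hvel
        (fun s hs => (hζl s hs).trans (le_abs_self M)) hs
    _ ≤ ‖x₀‖ * l + A * |M| * (l * t) := by
        rw [hzl]
        gcongr
        exacts [le_mul_of_one_le_right (norm_nonneg _) hl1, hs.2]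
    _ = (‖x₀‖ + A * |M| * t) * l := by ring

theorem tendsto_inv_smul_momentum {y η : ℝ → E d} {X Ξ : ℝ → ℝ → E d} {ξp : E d}
    {c C M t : ℝ} (hμ : 0 < μ) (ha : MetricDecay μ a) (hV : ContDiff ℝ 1 V)
    (hV' : fderiv ℝ V =o[cocompact (E d)] fun x => ‖x‖) (hyη : IsHamiltonSol (kk a) y η)
    (hη : Tendsto η atTop (𝓝 ξp))
    (hXΞ : ∀ᶠ l in atTop, IsHamiltonSol (fun x ξ => kk a x ξ + V x) (X l) (Ξ l) ∧
      X l 0 = y 0 ∧ Ξ l 0 = l • η 0)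
    (hc : 0 < c) (ht : 0 < t)
    (hbd : ∀ᶠ l in atTop, ∀ s ∈ Set.Icc 0 t, c * l * s - C ≤ ‖X l s‖ ∧ ‖Ξ l s‖ ≤ M * l) :
    Tendsto (fun l : ℝ => l⁻¹ • Ξ l t) atTop (𝓝 ξp) := by
  let z : ℝ → ℝ → E d := fun l s => X l (l⁻¹ * s)
  let ζ : ℝ → ℝ → E d := fun l s => l⁻¹ • Ξ l (l⁻¹ * s)
  have hsol : ∀ᶠ l in atTop,
      IsHamiltonSol (fun x ξ => kk a x ξ + l⁻¹ ^ 2 * V x) (z l) (ζ l) := by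
    filter_upwards [hXΞ, eventually_ne_atTop 0] with l hl hl0 using hl.1.rescale_kk_add hl0
  have hz0 : ∀ᶠ l in atTop, z l 0 = y 0 := by
    filter_upwards [hXΞ] with l hl
    simpa only [z, mul_zero] using hl.2.1
  have hζ0 : ∀ᶠ l in atTop, ζ l 0 = η 0 := by
    filter_upwards [hXΞ, eventually_ne_atTop 0] with l hl hl0
    simp only [ζ, mul_zero, hl.2.2, inv_smul_smul₀ hl0]
  have hzζ : ∀ᶠ l in atTop, ∀ s ∈ Set.Icc 0 (l * t), c * s - C ≤ ‖z l s‖ ∧ ‖ζ l s‖ ≤ M := by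
    filter_upwards [hbd, eventually_gt_atTop 0] with l hl hl0 s hs
    obtain ⟨hX, hΞ⟩ := hl (l⁻¹ * s)
      ⟨mul_nonneg (inv_nonneg.2 hl0.le) hs.1, (inv_mul_le_iff₀ hl0).2 hs.2⟩
    rw [mul_assoc, mul_inv_cancel_left₀ hl0.ne'] at hX
    refine ⟨hX, ?_⟩
    rwa [norm_smul, norm_inv, Real.norm_of_nonneg hl0.le, inv_mul_le_iff₀ hl0, mul_comm l M]
  have hlim := tendsto_momentum_at_horizon hμ ha
    (fun l => (hV.differentiable one_ne_zero).const_mul (l⁻¹ ^ 2)) hyη hη hsol hz0 hζ0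
    (tendsto_id.atTop_mul_const ht) hc hzζ fun ε hε =>
      eventually_norm_fderiv_rescaled_le_along ha hV hV' ht hsol hz0
        (hzζ.mono fun l hl s hs => (hl s hs).2) hε
  refine hlim.congr' ?_
  filter_upwards [eventually_ne_atTop 0] with l hl
  simp only [ζ, id, inv_mul_cancel_left₀ hl]

theorem stmt9_general {T : ℝ} {x0 ξ0 : E d} {y η : ℝ → E d} {ξp ξm : E d} {X Ξ : ℝ → ℝ → E d}
    {c' C' M : ℝ} (hμ : 0 < μ) (ha : MetricDecay μ a) (hV : ContDiff ℝ 1 V)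
    (hV' : fderiv ℝ V =o[cocompact (E d)] fun x => ‖x‖)
    (hyHam : IsHamiltonSol (kk a) y η) (hy0 : y 0 = x0) (hη0 : η 0 = ξ0)
    (hξp : Tendsto η atTop (𝓝 ξp)) (hξm : Tendsto η atBot (𝓝 ξm))
    (hXHam : ∀ᶠ l in atTop, IsHamiltonSol (fun z ζ => kk a z ζ + V z) (X l) (Ξ l) ∧
      X l 0 = x0 ∧ Ξ l 0 = l • ξ0)
    (hc' : 0 < c')
    (hbd : ∀ᶠ l in atTop, ∀ s, |s| ≤ T → c' * l * |s| - C' ≤ ‖X l s‖ ∧ ‖Ξ l s‖ ≤ M * l) :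
    (∀ t, 0 < t → t ≤ T → Tendsto (fun l : ℝ => l⁻¹ • Ξ l t) atTop (𝓝 ξp)) ∧
    (∀ t, -T ≤ t → t < 0 → Tendsto (fun l : ℝ => l⁻¹ • Ξ l t) atTop (𝓝 ξm)) := by
  subst hy0 hη0
  refine ⟨fun t ht htT => ?_, fun t htT ht => ?_⟩
  · refine tendsto_inv_smul_momentum (C := C') (M := M) hμ ha hV hV' hyHam hξp hXHam hc' ht ?_
    filter_upwards [hbd] with l hl s hs
    simpa only [abs_of_nonneg hs.1] using hl s (by rw [abs_of_nonneg hs.1]; exact hs.2.trans htT)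
  · have hyrev : IsHamiltonSol (kk a) (fun s => y (-s)) (fun s => -η (-s)) := by
      have hzero : IsHamiltonSol (fun x ξ => kk a x ξ + (fun _ => 0 : E d → ℝ) x) y η := by
        simpa only [add_zero] using hyHam
      simpa only [add_zero] using hzero.time_reversal
    have hrev : Tendsto (fun l : ℝ => l⁻¹ • -Ξ l (- -t)) atTop (𝓝 (-ξm)) := by
      refine tendsto_inv_smul_momentum (X := fun l s => X l (-s)) (Ξ := fun l s => -Ξ l (-s))
        (C := C') (M := M) hμ ha hV hV' hyrev (hξm.comp tendsto_neg_atTop_atBot).neg ?_ hc'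
        (neg_pos.2 ht) ?_
      · filter_upwards [hXHam] with l hl
        refine ⟨hl.1.time_reversal, ?_, ?_⟩ <;> simp [hl.2]
      · filter_upwards [hbd] with l hl s hs
        have habs : |-s| = s := by rw [abs_neg, abs_of_nonneg hs.1]
        simpa only [habs, norm_neg] using hl (-s) (by rw [habs]; linarith [hs.2])
    simpa only [smul_neg, neg_neg] using hrev.neg

end HighEnergy

namespace AssumptionC

variable {d : ℕ} {μ ν : ℝ} {a : Fin d → Fin d → E d → ℝ} {VL VS : E d → ℝ}

theorem metricDecay (hAC : AssumptionC μ ν a VL VS) (hμ : 0 ≤ μ) : MetricDecay μ a := by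
  obtain ⟨ha, -, -, hdecay, -⟩ := hAC
  refine ⟨fun m n => (ha m n).of_le (by norm_cast), fun m n => ?_, fun m n => ?_⟩
  · obtain ⟨D, hD, hDle⟩ := hdecay m n 0
    refine ⟨D + 1, fun x => ?_⟩
    have hdev : |a m n x - if m = n then (1 : ℝ) else 0| ≤ D := by
      have h := hDle x
      rw [norm_iteratedFDeriv_zero, Real.norm_eq_abs] at h
      exact h.trans <| mul_le_of_le_one_right hD.le <|
        Real.rpow_le_one_of_one_le_of_nonpos (one_le_jap x) (by simpa using hμ)
    have hδ : |if m = n then (1 : ℝ) else 0| ≤ 1 := by split_ifs <;> simp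
    linarith [abs_sub_abs_le_abs_sub (a m n x) (if m = n then (1 : ℝ) else 0)]
  · obtain ⟨D, -, hDle⟩ := hdecay m n 1
    refine ⟨D, fun x => ?_⟩
    have h := hDle x
    rwa [norm_iteratedFDeriv_one, fderiv_sub_const, Nat.cast_one, neg_sub_comm] at h

theorem contDiff_potential (hAC : AssumptionC μ ν a VL VS) :
    ContDiff ℝ 1 fun x => VL x + VS x := by
  obtain ⟨-, -, -, -, hVL, hVS, -⟩ := hAC
  exact (hVL.add hVS).of_le (by norm_cast)

theorem fderiv_potential_isLittleO (hAC : AssumptionC μ ν a VL VS) (hμ : 0 < μ) (hν : 0 < ν) :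
    fderiv ℝ (fun x => VL x + VS x) =o[cocompact (E d)] fun x => ‖x‖ := by
  obtain ⟨-, -, -, -, hVL, hVS, hVLle, hVSle⟩ := hAC
  have hsymbol : ∀ {W : E d → ℝ} {κ : ℝ}, 0 < κ →
      (∀ j : ℕ, ∃ C > 0, ∀ x, ‖iteratedFDeriv ℝ j W x‖ ≤ C * jap x ^ (2 - κ - (j : ℝ))) →
      fderiv ℝ W =o[cocompact (E d)] fun x => ‖x‖ := by
    intro W κ hκ hW
    obtain ⟨C, -, hC⟩ := hW 1
    refine (IsBigO.of_bound C (Eventually.of_forall fun x => ?_)).trans_isLittleO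
      (jap_rpow_one_sub_isLittleO_norm hκ)
    have h := hC x
    rw [norm_iteratedFDeriv_one, Nat.cast_one, show 2 - κ - 1 = 1 - κ by ring] at h
    rwa [Real.norm_of_nonneg (Real.rpow_nonneg (jap_pos x).le _)]
  refine ((hsymbol hμ hVLle).add (hsymbol hν hVSle)).congr_left fun x => ?_
  exact (fderiv_fun_add (hVL.differentiable (by simp) x) (hVS.differentiable (by simp) x)).symm

end AssumptionC


/-- Theorem 6, high-energy asymptotics of the momentum. -/
theorem stmt9 (d : ℕ) (hd : 1 ≤ d) (μ ν : ℝ) (hμ : 1 / 2 < μ) (hμ1 : μ ≤ 1) (hν : 1 < ν)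
    (a : Fin d → Fin d → E d → ℝ) (VL VS : E d → ℝ) (hAC : AssumptionC μ ν a VL VS)
    (T : ℝ) (hT : 0 < T) (x0 ξ0 : E d) (hξ0 : ξ0 ≠ 0)
    (y η : ℝ → E d) (hyHam : IsHamiltonSol (kk a) y η) (hy0 : y 0 = x0) (hη0 : η 0 = ξ0)
    (c C : ℝ) (hc : 0 < c) (hC : 0 < C) (hnt : ∀ s : ℝ, c * |s| - C ≤ ‖y s‖)
    (ξp ξm : E d) (hξp : Tendsto η atTop (𝓝 ξp)) (hξm : Tendsto η atBot (𝓝 ξm))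
    (X Ξ : ℝ → ℝ → E d)
    (hXHam : ∀ l : ℝ, 1 ≤ l →
      IsHamiltonSol (fun z ζ => kk a z ζ + (VL z + VS z)) (X l) (Ξ l) ∧
        X l 0 = x0 ∧ Ξ l 0 = l • ξ0)
    (lam0 c' C' M : ℝ) (hlam0 : 1 ≤ lam0) (hc' : 0 < c') (hC' : 0 < C') (hM : 0 < M)
    (hbd : ∀ l : ℝ, lam0 ≤ l → ∀ s : ℝ, |s| ≤ T →
      c' * l * |s| - C' ≤ ‖X l s‖ ∧ ‖Ξ l s‖ ≤ M * l) :
    (∀ t : ℝ, 0 < t → t ≤ T → Tendsto (fun l : ℝ => l⁻¹ • Ξ l t) atTop (𝓝 ξp)) ∧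
    (∀ t : ℝ, -T ≤ t → t < 0 → Tendsto (fun l : ℝ => l⁻¹ • Ξ l t) atTop (𝓝 ξm)) := by
  have hμ0 : 0 < μ := by linarith
  exact stmt9_general hμ0 (hAC.metricDecay hμ0.le) hAC.contDiff_potential
    (hAC.fderiv_potential_isLittleO hμ0 (by linarith)) hyHam hy0 hη0 hξp hξm
    ((eventually_ge_atTop 1).mono hXHam) hc' ((eventually_ge_atTop lam0).mono hbd)
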